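/- For each l ∈ ℕ and each D > 1, there exists 0 < a < 1 such that: if (Z, d_Z) is any metric space and h : 2^l → Z is a map with (1−a)·Lip(h) < min_{δ∈2^l} d_Z(h(δ), h(−δ)), then h is injective and dist(h) = Lip(h)·Lip(h⁻¹) ≤ D. -/

import Mathlib

open Finset

noncomputable section

/-- Normalized Hamming distance on the cube `{±1}^n` (modeled as `Fin n → Bool`). -/
def hdist (n : ℕ) (ε δ : Fin n → Bool) : ℝ :=
  ((Finset.univ.filter fun i => ε i ≠ δ i).card : ℝ) / n

/-- `-ε`: flip all coordinates. -/
def negCube {n : ℕ} (ε : Fin n → Bool) : Fin n → Bool := fun i => !(ε i)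

/-- `d_i ε`: flip the `i`-th coordinate. -/
def flipCoord {n : ℕ} (i : Fin n) (ε : Fin n → Bool) : Fin n → Bool :=
  Function.update ε i (!(ε i))

/-- Expectation with respect to the uniform probability measure on the cube. -/
def cubeE (n : ℕ) (Φ : (Fin n → Bool) → ℝ) : ℝ :=
  (∑ ε : Fin n → Bool, Φ ε) / 2 ^ n

/-- Lipschitz constant of a map from the cube (with metric `hdist`) into a metric space,
with the convention `0 / 0 = 0`. -/
def cubeLip {n : ℕ} {X : Type} [MetricSpace X] (f : (Fin n → Bool) → X) : ℝ :=
  sSup { r : ℝ | ∃ ε δ, r = dist (f ε) (f δ) / hdist n ε δ }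

/-- A map between (bundled) metric spaces. -/
structure MetricMap where
  X : Type
  Y : Type
  mX : MetricSpace X
  mY : MetricSpace Y
  F : X → Y

attribute [instance] MetricMap.mX MetricMap.mY

/-- Lipschitz constant of the "inverse" of a map from the cube: `sup ∂(ε,δ)/d(f(ε),f(δ))`,
with the convention `0 / 0 = 0`.  For an injective `f` this is `Lip(f⁻¹)`. -/
def cubeCoLip {n : ℕ} {X : Type} [MetricSpace X] (f : (Fin n → Bool) → X) : ℝ :=
  sSup { r : ℝ | ∃ ε δ, r = hdist n ε δ / dist (f ε) (f δ) }

/-- The distortion `dist(f) = Lip(f)·Lip(f⁻¹)` of an (injective) map from the cube. -/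
def cubeDistortion {n : ℕ} {X : Type} [MetricSpace X] (f : (Fin n → Bool) → X) : ℝ :=
  cubeLip f * cubeCoLip f

/-!
A point `δ` lies on a geodesic from `ε` to `-ε`, so `∂(δ, -ε) = 1 - ∂(ε, δ)`. If `f` nearly attains
its Lipschitz constant `L` on antipodal pairs, the triangle inequality leaves no room for `f ε` and
`f δ` to be close: `d(f ε, f δ) > (1 - a) L - L (1 - ∂(ε, δ)) = L (∂(ε, δ) - a)`. The loss `a` is
absorbed because distinct points satisfy `n ∂(ε, δ) ≥ 1`: the right-hand side is at least
`(1 - n a) L ∂(ε, δ)`, and the distortion of `f` is at most `1 / (1 - n a)`.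
-/

section hdist

variable {n : ℕ} {ε δ : Fin n → Bool}

lemma hdist_eq_hammingDist_div (ε δ : Fin n → Bool) :
    hdist n ε δ = (hammingDist ε δ : ℝ) / n :=
  rfl

lemma hdist_self (ε : Fin n → Bool) : hdist n ε ε = 0 := by
  simp [hdist_eq_hammingDist_div]

lemma hdist_nonneg (ε δ : Fin n → Bool) : 0 ≤ hdist n ε δ :=
  div_nonneg (Nat.cast_nonneg _) (Nat.cast_nonneg _)

lemma dimension_ne_zero_of_ne (hne : ε ≠ δ) : n ≠ 0 := by
  rintro rfl
  exact hne (Subsingleton.elim ε δ)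

lemma one_le_mul_hdist_of_ne (hne : ε ≠ δ) : 1 ≤ n * hdist n ε δ := by
  have hn : (n : ℝ) ≠ 0 := Nat.cast_ne_zero.mpr (dimension_ne_zero_of_ne hne)
  rw [hdist_eq_hammingDist_div, mul_div_cancel₀ _ hn]
  exact_mod_cast hammingDist_pos.mpr hne

lemma hdist_pos_of_ne (hne : ε ≠ δ) : 0 < hdist n ε δ :=
  pos_of_mul_pos_right (zero_lt_one.trans_le (one_le_mul_hdist_of_ne hne)) n.cast_nonneg

lemma hammingDist_add_hammingDist_negCube (ε δ : Fin n → Bool) :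
    hammingDist ε δ + hammingDist δ (negCube ε) = n := by
  have hagree (i : Fin n) : δ i ≠ negCube ε i ↔ ¬ε i ≠ δ i := by
    cases hε : ε i <;> simp [negCube, hε]
  simp only [hammingDist, hagree, card_filter_add_card_filter_not, card_univ, Fintype.card_fin]

lemma hdist_add_hdist_negCube (hn : n ≠ 0) (ε δ : Fin n → Bool) :
    hdist n ε δ + hdist n δ (negCube ε) = 1 := by
  simp only [hdist_eq_hammingDist_div]
  rw [← add_div, ← Nat.cast_add, hammingDist_add_hammingDist_negCube,
    div_self (Nat.cast_ne_zero.mpr hn)]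

end hdist

section cubeLip

variable {n : ℕ} {X : Type} [MetricSpace X] {f : (Fin n → Bool) → X}

lemma dist_div_hdist_le_cubeLip (f : (Fin n → Bool) → X) (ε δ : Fin n → Bool) :
    dist (f ε) (f δ) / hdist n ε δ ≤ cubeLip f := by
  refine le_csSup (Set.Finite.bddAbove ?_) ⟨ε, δ, rfl⟩
  refine (Set.finite_range fun p : (Fin n → Bool) × (Fin n → Bool) =>
    dist (f p.1) (f p.2) / hdist n p.1 p.2).subset ?_
  rintro _ ⟨ε', δ', rfl⟩
  exact ⟨(ε', δ'), rfl⟩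

lemma cubeLip_nonneg (f : (Fin n → Bool) → X) : 0 ≤ cubeLip f :=
  Real.sSup_nonneg fun _ ⟨ε, δ, hr⟩ => hr ▸ div_nonneg dist_nonneg (hdist_nonneg ε δ)

lemma dist_le_cubeLip_mul_hdist (f : (Fin n → Bool) → X) (ε δ : Fin n → Bool) :
    dist (f ε) (f δ) ≤ cubeLip f * hdist n ε δ := by
  rcases eq_or_ne ε δ with rfl | hne
  · simp [hdist_self]
  · exact (div_le_iff₀ (hdist_pos_of_ne hne)).mp (dist_div_hdist_le_cubeLip f ε δ)

lemma cubeCoLip_le {K : ℝ} (hK : 0 ≤ K) (hf : ∀ ε δ, hdist n ε δ ≤ K * dist (f ε) (f δ)) :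
    cubeCoLip f ≤ K := by
  refine Real.sSup_le ?_ hK
  rintro _ ⟨ε, δ, rfl⟩
  exact div_le_of_le_mul₀ dist_nonneg hK (hf ε δ)

lemma cubeDistortion_le {D : ℝ} (hD : 0 ≤ D)
    (hf : ∀ ε δ, cubeLip f * hdist n ε δ ≤ D * dist (f ε) (f δ)) : cubeDistortion f ≤ D := by
  rw [cubeDistortion]
  rcases (cubeLip_nonneg f).eq_or_lt with hL | hL
  · rwa [← hL, zero_mul]
  · rw [← le_div_iff₀' hL]
    refine cubeCoLip_le (div_nonneg hD hL.le) fun ε δ => ?_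
    rw [div_mul_eq_mul_div, le_div_iff₀' hL]
    exact hf ε δ

end cubeLip

section antipodal

variable {n : ℕ} {X : Type} [MetricSpace X] {f : (Fin n → Bool) → X} {a : ℝ}

lemma mul_cubeLip_mul_hdist_lt_dist_of_antipodal {ε δ : Fin n → Bool}
    (hε : (1 - a) * cubeLip f < dist (f ε) (f (negCube ε))) (hne : ε ≠ δ) :
    (1 - n * a) * (cubeLip f * hdist n ε δ) < dist (f ε) (f δ) := by
  have hgeodesic (ε' : Fin n → Bool) : hdist n ε' (negCube ε) = 1 - hdist n ε ε' :=
    eq_sub_of_add_eq' (hdist_add_hdist_negCube (dimension_ne_zero_of_ne hne) ε ε')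
  have hantipode : dist (f ε) (f (negCube ε)) ≤ cubeLip f := by
    simpa only [hgeodesic, hdist_self, sub_zero, mul_one] using
      dist_le_cubeLip_mul_hdist f ε (negCube ε)
  have hloss : a * cubeLip f ≤ a * cubeLip f * (n * hdist n ε δ) :=
    le_mul_of_one_le_right (by linarith) (one_le_mul_hdist_of_ne hne)
  calc
    (1 - n * a) * (cubeLip f * hdist n ε δ)
        = cubeLip f * hdist n ε δ - a * cubeLip f * (n * hdist n ε δ) := by ring
    _ ≤ cubeLip f * hdist n ε δ - a * cubeLip f := sub_le_sub_left hloss _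
    _ = (1 - a) * cubeLip f - cubeLip f * hdist n δ (negCube ε) := by rw [hgeodesic]; ring
    _ < dist (f ε) (f (negCube ε)) - dist (f δ) (f (negCube ε)) := by
      linarith [dist_le_cubeLip_mul_hdist f δ (negCube ε)]
    _ ≤ dist (f ε) (f δ) := sub_le_iff_le_add.mpr (dist_triangle _ _ _)

lemma injective_of_antipodal (hna : n * a ≤ 1)
    (hf : ∀ ε, (1 - a) * cubeLip f < dist (f ε) (f (negCube ε))) : Function.Injective f := by
  intro ε δ hεδ
  by_contra hne
  have hlower : 0 ≤ (1 - n * a) * (cubeLip f * hdist n ε δ) :=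
    mul_nonneg (sub_nonneg.mpr hna) (mul_nonneg (cubeLip_nonneg f) (hdist_nonneg ε δ))
  have himage_pos : 0 < dist (f ε) (f δ) :=
    hlower.trans_lt (mul_cubeLip_mul_hdist_lt_dist_of_antipodal (hf ε) hne)
  exact dist_pos.mp himage_pos hεδ

lemma cubeDistortion_le_inv_of_antipodal (hna : n * a < 1)
    (hf : ∀ ε, (1 - a) * cubeLip f < dist (f ε) (f (negCube ε))) :
    cubeDistortion f ≤ (1 - n * a)⁻¹ := by
  have hpos : 0 < 1 - n * a := sub_pos.mpr hna
  refine cubeDistortion_le (inv_nonneg.mpr hpos.le) fun ε δ => ?_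
  rcases eq_or_ne ε δ with rfl | hne
  · simp [hdist_self]
  · exact (le_inv_mul_iff₀ hpos).mpr
      (mul_cubeLip_mul_hdist_lt_dist_of_antipodal (hf ε) hne).le

end antipodal

/-- Proposition 5.4: a map on the cube whose antipodal distances nearly attain its Lipschitz
constant is an embedding of distortion at most `D`. -/
theorem sharp_embedding (l : ℕ) (hl : 0 < l) (D : ℝ) (hD : 1 < D) :
    ∃ a : ℝ, 0 < a ∧ a < 1 ∧
      ∀ (Z : Type) [MetricSpace Z] (h : (Fin l → Bool) → Z),
        (∀ δ : Fin l → Bool, (1 - a) * cubeLip h < dist (h δ) (h (negCube δ))) →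
        Function.Injective h ∧ cubeDistortion h ≤ D := by
  have hl1 : (1 : ℝ) ≤ l := Nat.one_le_cast.mpr hl
  have hl0 : (0 : ℝ) < l := zero_lt_one.trans_le hl1
  have hDinv0 : 0 < D⁻¹ := inv_pos.mpr (zero_lt_one.trans hD)
  have hDinv1 : D⁻¹ < 1 := inv_lt_one_of_one_lt₀ hD
  -- `a` solves `1 / (1 - l * a) = D`.
  set a : ℝ := (1 - D⁻¹) / l
  have ha0 : 0 < a := div_pos (sub_pos.mpr hDinv1) hl0
  have hla : l * a = 1 - D⁻¹ := mul_div_cancel₀ _ hl0.ne'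
  have hla1 : l * a < 1 := by linarith
  have ha1 : a < 1 := (le_mul_of_one_le_left ha0.le hl1).trans_lt hla1
  refine ⟨a, ha0, ha1, fun Z _ h hh => ⟨injective_of_antipodal hla1.le hh, ?_⟩⟩
  calc
    cubeDistortion h ≤ (1 - l * a)⁻¹ := cubeDistortion_le_inv_of_antipodal hla1 hh
    _ = D := by rw [hla, sub_sub_cancel, inv_inv]
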